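/- Let f : A' → A be a homomorphism of noetherian local commutative rings, let a' = (a'_0, …, a'_r) be a regular sequence in A' with r ≥ 1 whose image a = (a_0, …, a_r) in A is again a regular sequence, and fix an index i with 0 ≤ i ≤ r. Let B' = A'[S_0, …, Ŝ_i, …, S_r] and B = A[S_0, …, Ŝ_i, …, S_r] be the polynomial rings in the variables S_j, j ≠ i, and let g : B' → B be the homomorphism extending f with g(S_j) = S_j. Then Tor_k^{B'}(B, B'/(a'_i S_j − a'_j : j ≠ i)) = 0 for all k > 0, and the natural map B ⊗_{B'} B'/(a'_i S_j − a'_j : j ≠ i) → B/(a_i S_j − a_j : j ≠ i) is an isomorphism. -/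

import Mathlib

/-!
STATEMENT 6: Let `f : A' → A` be a homomorphism of noetherian local commutative rings
(encoded as the structure map of an `A'`-algebra structure on `A`), let
`a' = (a'_0, …, a'_r)` be a regular sequence in `A'` with `r ≥ 1` whose image in `A` is
again a regular sequence, and fix `i`.  Let `B' = A'[S_j : j ≠ i]`, `B = A[S_j : j ≠ i]`
and `g : B' → B` the homomorphism extending `f` with `g(S_j) = S_j` (i.e. the algebra
structure `MvPolynomial.algebraMvPolynomial`, whose structure map is
`MvPolynomial.map f`).  Then `Tor_k^{B'}(B, B'/(a'_i S_j − a'_j : j ≠ i)) = 0` for all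
`k > 0`, and the natural map
`B ⊗[B'] B'/(a'_i S_j − a'_j : j ≠ i) → B/(a_i S_j − a_j : j ≠ i)` is an isomorphism.
-/

/-- A list `xs = [x_1, …, x_n]` of elements of a commutative ring `R` is a regular
sequence if for each `k` the image of `x_{k+1}` in `R ⧸ (x_1, …, x_k)` is a
nonzerodivisor. -/
def IsRegularSequence {R : Type*} [CommRing R] (xs : List R) : Prop :=
  ∀ (k : ℕ) (hk : k < xs.length)
    (y : R ⧸ Ideal.span {r | r ∈ xs.take k}),
    Ideal.Quotient.mk (Ideal.span {r | r ∈ xs.take k}) (xs.get ⟨k, hk⟩) * y = 0 → y = 0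

attribute [local instance] MvPolynomial.algebraMvPolynomial

section TorPart

open TensorProduct RingTheory.Sequence

/-- diagram chase -/
lemma chase_exact {R : Type*} [CommRing R] {K L M X3 X2 X1 X0 : Type*}
    [AddCommGroup K] [AddCommGroup L] [AddCommGroup M] [AddCommGroup X3] [AddCommGroup X2]
    [AddCommGroup X1] [AddCommGroup X0] [Module R K] [Module R L] [Module R M] [Module R X3]
    [Module R X2] [Module R X1] [Module R X0]
    (ι : K →ₗ[R] L) (π : L →ₗ[R] M) (hιπ : Function.Exact ι π) (hπ : Function.Surjective π)
    (d3 : X3 →ₗ[R] X2) (d2 : X2 →ₗ[R] X1) (d1 : X1 →ₗ[R] X0)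
    (h32 : d2 ∘ₗ d3 = 0) (h21 : d1 ∘ₗ d2 = 0)
    (hL : Function.Exact (d3.lTensor L) (d2.lTensor L))
    (hK : Function.Exact (d2.lTensor K) (d1.lTensor K))
    (hinj : Function.Injective (ι.rTensor X0)) :
    Function.Exact (d3.lTensor M) (d2.lTensor M) := by
  intro x
  constructor
  · intro hx
    obtain ⟨y, rfl⟩ := LinearMap.rTensor_surjective X2 hπ x
    rw [← LinearMap.comp_apply, LinearMap.lTensor_comp_rTensor,
      ← LinearMap.rTensor_comp_lTensor, LinearMap.comp_apply] at hx
    obtain ⟨z, hz⟩ := (rTensor_exact X1 hιπ hπ _).1 hx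
    have h1 : d1.lTensor K z = 0 := by
      apply hinj
      rw [map_zero, ← LinearMap.comp_apply, LinearMap.rTensor_comp_lTensor,
        ← LinearMap.lTensor_comp_rTensor, LinearMap.comp_apply, hz, ← LinearMap.comp_apply,
        ← LinearMap.lTensor_comp, h21, LinearMap.lTensor_zero, LinearMap.zero_apply]
    obtain ⟨z', rfl⟩ := (hK _).1 h1
    have h2 : d2.lTensor L (y - ι.rTensor X2 z') = 0 := by
      rw [map_sub, ← hz, ← LinearMap.comp_apply, ← LinearMap.comp_apply (LinearMap.lTensor _ _),
        LinearMap.rTensor_comp_lTensor, LinearMap.lTensor_comp_rTensor, sub_self]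
    obtain ⟨w, hw⟩ := (hL _).1 h2
    refine ⟨π.rTensor X3 w, ?_⟩
    rw [← LinearMap.comp_apply, LinearMap.lTensor_comp_rTensor,
        ← LinearMap.rTensor_comp_lTensor, LinearMap.comp_apply, hw, map_sub,
        ((rTensor_exact X2 hιπ hπ).apply_apply_eq_zero z'), sub_zero]
  · rintro ⟨y, rfl⟩
    rw [← LinearMap.comp_apply, ← LinearMap.lTensor_comp, h32, LinearMap.lTensor_zero,
      LinearMap.zero_apply]

lemma weaklyRegular_ker {R : Type*} [CommRing R] {rs : List R} :
    ∀ {K L M : Type _} [AddCommGroup K] [AddCommGroup L] [AddCommGroup M]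
    [Module R K] [Module R L] [Module R M]
    (ι : K →ₗ[R] L) (π : L →ₗ[R] M) (_ : Function.Injective ι) (_ : Function.Exact ι π)
    (_ : Function.Surjective π) (_ : IsWeaklyRegular L rs) (_ : IsWeaklyRegular M rs),
    IsWeaklyRegular K rs := by
  induction rs with
  | nil => intros; exact IsWeaklyRegular.nil _ _
  | cons y rs ih =>
    intro K L M _ _ _ _ _ _ ι π hι hex hπ hL hM
    rw [isWeaklyRegular_cons_iff] at hL hM ⊢
    refine ⟨hL.1.of_injective ι hι, ?_⟩
    refine ih (QuotSMulTop.map y ι) (QuotSMulTop.map y π) ?_ (QuotSMulTop.map_exact y hex hπ)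
      (QuotSMulTop.map_surjective y hπ) hL.2 hM.2
    have h0 : Function.Exact (0 : K →ₗ[R] K) ι := by
      intro x
      constructor
      · intro h
        have : x = 0 := hι (by simpa using h)
        exact ⟨0, by simp [this]⟩
      · rintro ⟨y, rfl⟩; simp
    have := QuotSMulTop.map_first_exact_on_four_term_exact_of_isSMulRegular_last h0 hex hM.1
    rw [injective_iff_map_eq_zero]
    intro a ha
    obtain ⟨b, rfl⟩ := (this a).1 ha
    simp

lemma weaklyRegular_injective {R : Type*} [CommRing R] {rs : List R}
    {K L M : Type _} [AddCommGroup K] [AddCommGroup L] [AddCommGroup M]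
    [Module R K] [Module R L] [Module R M]
    (ι : K →ₗ[R] L) (π : L →ₗ[R] M) (hι : Function.Injective ι) (hex : Function.Exact ι π)
    (hπ : Function.Surjective π) (hM : IsWeaklyRegular M rs) :
    Function.Injective (ι.rTensor (R ⧸ Ideal.ofList rs)) := by
  have h0 : Function.Exact (0 : K →ₗ[R] K) ι := by
    intro x
    constructor
    · intro h
      have : x = 0 := hι (by simpa using h)
      exact ⟨0, by simp [this]⟩
    · rintro ⟨y, rfl⟩; simp
  have key := map_first_exact_on_four_term_right_exact_of_isSMulRegular_last h0 hex hπ hM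
  have hnat : ∀ x, tensorQuotEquivQuotSMul L (Ideal.ofList rs)
      (ι.rTensor (R ⧸ Ideal.ofList rs) x) =
      (Submodule.mapQ _ _ _ (Submodule.smul_top_le_comap_smul_top (Ideal.ofList rs) ι))
        (tensorQuotEquivQuotSMul K (Ideal.ofList rs) x) := by
    intro x
    induction x with
    | zero => simp
    | add x y hx hy => simp only [map_add, hx, hy]
    | tmul k q =>
      obtain ⟨r, rfl⟩ := Ideal.Quotient.mk_surjective q
      rw [LinearMap.rTensor_tmul, tensorQuotEquivQuotSMul_tmul_mk,
        tensorQuotEquivQuotSMul_tmul_mk, Submodule.mapQ_apply, map_smul]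
  rw [injective_iff_map_eq_zero]
  intro a ha
  have h1 := hnat a
  rw [ha, map_zero] at h1
  obtain ⟨b, hb⟩ := (key _).1 h1.symm
  have : tensorQuotEquivQuotSMul K (Ideal.ofList rs) a = 0 := by
    rw [← hb]
    obtain ⟨b, rfl⟩ := Submodule.Quotient.mk_surjective _ b
    simp
  simpa using this

lemma tensor_exact {R : Type} [CommRing R] {rs : List R} (hR : IsWeaklyRegular R rs)
    (P : ℕ → Type) [∀ n, AddCommGroup (P n)] [∀ n, Module R (P n)] 
    (d : ∀ n, P (n + 1) →ₗ[R] P n) (ε : P 0 →ₗ[R] (R ⧸ Ideal.ofList rs))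
    [∀ n, Module.Flat R (P n)]
    (hd : ∀ n, Function.Exact (d (n + 1)) (d n)) (hε : Function.Exact (d 0) ε)
    (hεs : Function.Surjective ε) (k : ℕ) :
    ∀ (M : Type) [AddCommGroup M] [Module R M], IsWeaklyRegular M rs →
      Function.Exact ((d (k + 1)).lTensor M) ((d k).lTensor M) := by
  induction k with
  | zero =>
    intro M _ _ hM
    obtain ⟨π, hπ⟩ : ∃ π : (M →₀ R) →ₗ[R] M, Function.Surjective π :=
      ⟨_, Finsupp.linearCombination_id_surjective R M⟩
    obtain ⟨K, _, _, ι, hι, hex⟩ : ∃ (K : Type) (_ : AddCommGroup K) (_ : Module R K)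
        (ι : K →ₗ[R] (M →₀ R)), Function.Injective ι ∧ Function.Exact ι π :=
      ⟨LinearMap.ker π, inferInstance, inferInstance, (LinearMap.ker π).subtype,
        Submodule.subtype_injective _, LinearMap.exact_subtype_ker_map π⟩
    refine chase_exact ι π hex hπ
      (d 1) (d 0) ε (hd 0).linearMap_comp_eq_zero hε.linearMap_comp_eq_zero
      (Module.Flat.lTensor_exact _ (hd 0)) (lTensor_exact _ hε hεs) ?_
    exact weaklyRegular_injective _ _ hι hex hπ hM
  | succ k ih =>
    intro M _ _ hM
    obtain ⟨π, hπ⟩ : ∃ π : (M →₀ R) →ₗ[R] M, Function.Surjective π :=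
      ⟨_, Finsupp.linearCombination_id_surjective R M⟩
    obtain ⟨K, _, _, ι, hι, hex⟩ : ∃ (K : Type) (_ : AddCommGroup K) (_ : Module R K)
        (ι : K →ₗ[R] (M →₀ R)), Function.Injective ι ∧ Function.Exact ι π :=
      ⟨LinearMap.ker π, inferInstance, inferInstance, (LinearMap.ker π).subtype,
        Submodule.subtype_injective _, LinearMap.exact_subtype_ker_map π⟩
    have hL : IsWeaklyRegular (M →₀ R) rs :=
      ((TensorProduct.rid R (M →₀ R)).isWeaklyRegular_congr rs).1 hR.isWeaklyRegular_lTensor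
    refine chase_exact ι π hex hπ
      (d (k+2)) (d (k+1)) (d k) (hd _).linearMap_comp_eq_zero (hd _).linearMap_comp_eq_zero
      (Module.Flat.lTensor_exact _ (hd _)) (ih _ ?_) ?_
    · exact weaklyRegular_ker _ _ hι hex hπ hL hM
    · exact Module.Flat.rTensor_preserves_injective_linearMap _ hι

open CategoryTheory in
lemma tor_subsingleton {R : Type} [CommRing R] {rs : List R} (hR : IsWeaklyRegular R rs)
    (M : Type) [AddCommGroup M] [Module R M] (hM : IsWeaklyRegular M rs) (k : ℕ) :
    Subsingleton (((Tor (ModuleCat R) (k + 1)).obj (ModuleCat.of R M)).obj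
      (ModuleCat.of R (R ⧸ Ideal.ofList rs))) := by
  let P := projectiveResolution (ModuleCat.of R (R ⧸ Ideal.ofList rs))
  rw [← ModuleCat.isZero_iff_subsingleton]
  refine Limits.IsZero.of_iso ?_ (P.isoLeftDerivedObj _ (k+1))
  change Limits.IsZero (HomologicalComplex.homology _ _)
  rw [← HomologicalComplex.exactAt_iff_isZero_homology]
  rw [HomologicalComplex.exactAt_iff' _ (k+2) (k+1) k (by simp) (by simp)]
  rw [ShortComplex.ShortExact.moduleCat_exact_iff_function_exact]
  have hproj : ∀ n, Module.Projective R (P.complex.X n) := fun n => 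
    (IsProjective.iff_projective _).2 (P.projective n)
  have hd : ∀ n, Function.Exact (P.complex.d (n+2) (n+1)).hom (P.complex.d (n+1) n).hom := by
    intro n
    exact (ShortComplex.ShortExact.moduleCat_exact_iff_function_exact _).1 (P.exact_succ n)
  have hε : Function.Exact (P.complex.d 1 0).hom (P.π.f 0).hom := by
    exact (ShortComplex.ShortExact.moduleCat_exact_iff_function_exact _).1 P.exact₀
  exact tensor_exact hR (fun n => P.complex.X n) (fun n => (P.complex.d (n+1) n).hom) (P.π.f 0).hom
    hd hε ((ModuleCat.epi_iff_surjective _).1 inferInstance) k M hM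

end TorPart

section RegPart

open TensorProduct RingTheory.Sequence

/-- `x` is a nonzerodivisor modulo `I`. -/
def RegMod {R : Type*} [CommRing R] (x : R) (I : Ideal R) : Prop :=
  ∀ p, x * p ∈ I → p ∈ I

/-- `l` is a weakly regular sequence modulo `I`. -/
def WReg {R : Type*} [CommRing R] : Ideal R → List R → Prop
  | _, [] => True
  | I, x :: l => RegMod x I ∧ WReg (I ⊔ Ideal.span {x}) l

lemma wreg_iff {R : Type*} [CommRing R] (l : List R) : ∀ (I : Ideal R),
    WReg I l ↔ ∀ k (hk : k < l.length), RegMod l[k] (I ⊔ Ideal.ofList (l.take k)) := by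
  induction l with
  | nil => intro I; simp [WReg]
  | cons x l ih =>
    intro I
    rw [WReg, ih]
    constructor
    · rintro ⟨h0, h⟩ k hk
      cases k with
      | zero => simpa using h0
      | succ k =>
        have := h k (by simpa using hk)
        simpa [sup_assoc] using this
    · intro h
      refine ⟨by have := h 0 (by simp); simp at this; exact this, fun k hk => ?_⟩
      have := h (k + 1) (by simpa using hk)
      simpa [sup_assoc] using this

lemma wreg_bot_iff {R : Type*} [CommRing R] (l : List R) :
    WReg ⊥ l ↔ IsWeaklyRegular R l := by
  rw [wreg_iff, isWeaklyRegular_iff]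
  refine forall_congr' fun k => forall_congr' fun hk => ?_
  rw [isSMulRegular_iff_right_eq_zero_of_smul]
  constructor
  · intro h y hy
    obtain ⟨p, rfl⟩ := Submodule.Quotient.mk_surjective _ y
    rw [← Submodule.Quotient.mk_smul, Submodule.Quotient.mk_eq_zero] at hy
    rw [Submodule.Quotient.mk_eq_zero]
    have := h p (by simpa using hy)
    simpa using this
  · intro h p hp
    have := h (Submodule.Quotient.mk p) (by
      rw [← Submodule.Quotient.mk_smul, Submodule.Quotient.mk_eq_zero]
      simpa using hp)
    rw [Submodule.Quotient.mk_eq_zero] at this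
    simpa using this

lemma isRegularSequence_iff {R : Type*} [CommRing R] (l : List R) :
    IsRegularSequence l ↔ IsWeaklyRegular R l := by
  rw [← wreg_bot_iff, wreg_iff]
  refine forall_congr' fun k => forall_congr' fun hk => ?_
  rw [bot_sup_eq]
  constructor
  · intro h p hp
    have := h (Ideal.Quotient.mk _ p) (by
      rw [← map_mul, Ideal.Quotient.eq_zero_iff_mem]; exact hp)
    rwa [Ideal.Quotient.eq_zero_iff_mem] at this
  · intro h y hy
    obtain ⟨p, rfl⟩ := Ideal.Quotient.mk_surjective y
    rw [← map_mul, Ideal.Quotient.eq_zero_iff_mem] at hy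
    rw [Ideal.Quotient.eq_zero_iff_mem]
    exact h p hy

lemma wreg_top {R : Type*} [CommRing R] (l : List R) : WReg (⊤ : Ideal R) l := by
  rw [wreg_iff]
  intro k hk p _
  simp

/-- replacing the sequence by a congruent one (up to sign) -/
lemma wreg_congr {R σ : Type*} [CommRing R] (y z : σ → R) (l : List σ) : ∀ (I : Ideal R),
    (∀ j, y j + z j ∈ I) → WReg I (l.map z) → WReg I (l.map y) := by
  induction l with
  | nil => intros; trivial
  | cons j l ih =>
    intro I hI h
    simp only [List.map_cons, WReg] at h ⊢
    have e : I ⊔ Ideal.span {y j} = I ⊔ Ideal.span {z j} := by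
      apply le_antisymm
      · refine sup_le le_sup_left ?_
        rw [Ideal.span_singleton_le_iff_mem]
        have h1 : y j = (y j + z j) - z j := by ring
        rw [h1]
        exact sub_mem (Ideal.mem_sup_left (hI j))
          (Ideal.mem_sup_right (Ideal.mem_span_singleton_self _))
      · refine sup_le le_sup_left ?_
        rw [Ideal.span_singleton_le_iff_mem]
        have h1 : z j = (y j + z j) - y j := by ring
        rw [h1]
        exact sub_mem (Ideal.mem_sup_left (hI j))
          (Ideal.mem_sup_right (Ideal.mem_span_singleton_self _))
    refine ⟨fun p hp => h.1 p ?_, ?_⟩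
    · have h1 : z j * p = p * (y j + z j) - y j * p := by ring
      rw [h1]
      exact sub_mem (Ideal.mul_mem_left _ _ (hI j)) hp
    · rw [e]
      exact ih _ (fun m => Ideal.mem_sup_left (hI m)) h.2

/-- `x T - a` is a nonzerodivisor in `D[T]` if `x` is a nonzerodivisor or `a` is a unit. -/
lemma poly_nzd {D : Type*} [CommRing D] (x a : D)
    (h : (∀ d, x * d = 0 → d = 0) ∨ IsUnit a) (q : Polynomial D)
    (hq : (Polynomial.C x * Polynomial.X - Polynomial.C a) * q = 0) : q = 0 := by
  have hc : ∀ n, x * q.coeff n = a * q.coeff (n + 1) := by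
    intro n
    have := congrArg (fun r => Polynomial.coeff r (n + 1)) hq
    simp only [sub_mul, mul_assoc, Polynomial.coeff_sub, Polynomial.coeff_C_mul,
      Polynomial.coeff_X_mul, Polynomial.coeff_zero] at this
    exact sub_eq_zero.1 this
  have h0 : a * q.coeff 0 = 0 := by
    have := congrArg (fun r => Polynomial.coeff r 0) hq
    simpa [sub_mul, mul_assoc] using this
  rcases h with h | h
  · by_contra hne
    have h1 := hc q.natDegree
    rw [Polynomial.coeff_eq_zero_of_natDegree_lt (Nat.lt_succ_self _), mul_zero] at h1
    exact hne (Polynomial.leadingCoeff_eq_zero.1 (h _ h1))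
  · ext n
    rw [Polynomial.coeff_zero]
    induction n with
    | zero => exact (h.mul_right_eq_zero).1 h0
    | succ n ih =>
      have := hc n
      rw [ih, mul_zero] at this
      exact (h.mul_right_eq_zero).1 this.symm

open MvPolynomial

lemma regMod_y {A σ : Type*} [CommRing A] (x : A) (a : σ → A) (s : Set σ) (j : σ) (hj : j ∉ s)
    (h : RegMod (C x : MvPolynomial σ A)
        (Ideal.span ((fun m => C x * X m - C (a m) : σ → MvPolynomial σ A) '' s)) ∨
      IsUnit (a j)) :
    RegMod (C x * X j - C (a j) : MvPolynomial σ A)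
      (Ideal.span ((fun m => C x * X m - C (a m) : σ → MvPolynomial σ A) '' s)) := by
  classical
  set I := Ideal.span ((fun m => C x * X m - C (a m) : σ → MvPolynomial σ A) '' s) with hI
  let mk := Ideal.Quotient.mk I
  let ψ : MvPolynomial σ A →+* Polynomial (MvPolynomial σ A ⧸ I) :=
    eval₂Hom ((Polynomial.C.comp mk).comp C)
      (fun m => if m = j then Polynomial.X else Polynomial.C (mk (X m)))
  have hψI : ∀ p ∈ I, ψ p = 0 := by
    intro p hp
    have : I ≤ RingHom.ker ψ := by
      refine Ideal.span_le.2 ?_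
      rintro _ ⟨m, hm, rfl⟩
      have hmj : m ≠ j := by rintro rfl; exact hj hm
      have h0 : mk (C x * X m - C (a m)) = 0 :=
        Ideal.Quotient.eq_zero_iff_mem.2 (Ideal.subset_span ⟨m, hm, rfl⟩)
      have : ψ (C x * X m - C (a m)) = Polynomial.C (mk (C x * X m - C (a m))) := by
        simp only [map_sub, map_mul]
        simp [ψ, hmj]
      simp only [SetLike.mem_coe, RingHom.mem_ker]
      rw [this, h0, map_zero]
    exact this hp
  have hev : (Polynomial.evalRingHom (mk (X j))).comp ψ = mk := by
    apply MvPolynomial.ringHom_ext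
    · intro r; simp [ψ]
    · intro m
      by_cases hm : m = j
      · subst hm; simp [ψ]
      · simp [ψ, hm]
  intro p hp
  have h1 := hψI _ hp
  rw [map_mul] at h1
  have h2 : ψ (C x * X j - C (a j)) =
      Polynomial.C (mk (C x)) * Polynomial.X - Polynomial.C (mk (C (a j))) := by
    rw [map_sub, map_mul]
    simp [ψ]
  rw [h2] at h1
  have h3 := poly_nzd _ _ (h.imp (fun h d hd => by
      obtain ⟨p, rfl⟩ := Ideal.Quotient.mk_surjective d
      rw [← map_mul, Ideal.Quotient.eq_zero_iff_mem] at hd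
      exact Ideal.Quotient.eq_zero_iff_mem.2 (h p hd))
      (fun h => (h.map C).map mk)) _ h1
  have h4 := congrArg (fun f => f p) hev
  simp only [RingHom.comp_apply, h3, map_zero] at h4
  exact Ideal.Quotient.eq_zero_iff_mem.1 h4.symm

/-- dropping `x` from `x, y₁, …, yₙ`. -/
lemma wreg_drop {A σ : Type*} [CommRing A] (x : A) (a : σ → A) (l : List σ) : ∀ (s : Set σ),
    l.Nodup → (∀ j ∈ l, j ∉ s) →
    WReg (Ideal.span ((fun m => C x * X m - C (a m) : σ → MvPolynomial σ A) '' s))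
      (C x :: l.map (fun m => C x * X m - C (a m) : σ → MvPolynomial σ A)) →
    WReg (Ideal.span ((fun m => C x * X m - C (a m) : σ → MvPolynomial σ A) '' s))
      (l.map (fun m => C x * X m - C (a m) : σ → MvPolynomial σ A)) := by
  induction l with
  | nil => intros; trivial
  | cons j l ih =>
    intro s hl hs h
    simp only [List.map_cons, WReg] at h ⊢
    obtain ⟨h1, h2, h3⟩ := h
    rw [List.nodup_cons] at hl
    have hy := regMod_y x a s j (hs j (by simp)) (Or.inl h1)
    refine ⟨hy, ?_⟩
    have e : Ideal.span ((fun m => C x * X m - C (a m) : σ → MvPolynomial σ A) '' s) ⊔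
        Ideal.span {C x * X j - C (a j)} =
        Ideal.span ((fun m => C x * X m - C (a m) : σ → MvPolynomial σ A) '' (insert j s)) := by
      rw [Set.image_insert_eq, Ideal.span_insert, sup_comm]
    have hx : RegMod (C x) (Ideal.span ((fun m => C x * X m - C (a m) : σ → MvPolynomial σ A) '' s)
        ⊔ Ideal.span {C x * X j - C (a j)}) := by
      generalize hI : Ideal.span ((fun m => C x * X m - C (a m) : σ → MvPolynomial σ A) '' s) = I
        at *
      generalize (C x * X j - C (a j) : MvPolynomial σ A) = y at *
      generalize (C x : MvPolynomial σ A) = x at *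
      intro p hp
      obtain ⟨u, hu, v, hv, huv⟩ := Submodule.mem_sup.1 hp
      obtain ⟨q, rfl⟩ := Ideal.mem_span_singleton'.1 hv
      have hq : q ∈ I ⊔ Ideal.span {x} := by
        apply h2
        have : y * q = x * p - u := by rw [← huv]; ring
        rw [this]
        exact sub_mem (Ideal.mem_sup_right (Ideal.mul_mem_right _ _
          (Ideal.mem_span_singleton_self _))) (Ideal.mem_sup_left hu)
      obtain ⟨u', hu', v', hv', huv'⟩ := Submodule.mem_sup.1 hq
      obtain ⟨t, rfl⟩ := Ideal.mem_span_singleton'.1 hv'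
      have : p - t * y ∈ I := by
        apply h1
        have : x * (p - t * y) = u + u' * y := by
          rw [mul_sub, ← huv, ← huv']; ring
        rw [this]
        exact add_mem hu (Ideal.mul_mem_right _ _ hu')
      have e' : p = (p - t * y) + t * y := by ring
      rw [e']
      exact add_mem (Ideal.mem_sup_left this) (Ideal.mem_sup_right
        (Ideal.mul_mem_left _ _ (Ideal.mem_span_singleton_self _)))
    rw [e] at hx ⊢
    refine ih (insert j s) hl.2 ?_ ⟨hx, ?_⟩
    · intro m hm
      rw [Set.mem_insert_iff, not_or]
      exact ⟨fun h => hl.1 (h ▸ hm), hs m (by simp [hm])⟩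
    · rw [← e, sup_assoc, sup_comm (Ideal.span {C x * X j - C (a j)}), ← sup_assoc]
      exact h3

lemma weaklyRegular_y {A σ : Type*} [CommRing A] (x : A) (a : σ → A) (l : List σ) (hl : l.Nodup)
    (h : IsWeaklyRegular A (x :: l.map a) ∨ ∃ j l', l = j :: l' ∧ IsUnit (a j)) :
    IsWeaklyRegular (MvPolynomial σ A)
      (l.map (fun m => C x * X m - C (a m) : σ → MvPolynomial σ A)) := by
  rw [← wreg_bot_iff]
  have e0 : Ideal.span ((fun m => C x * X m - C (a m) : σ → MvPolynomial σ A) '' ∅) = ⊥ := by simp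
  rcases h with h | ⟨j, l, rfl, hu⟩
  · have h1 := h.of_flat (S := MvPolynomial σ A)
    rw [← wreg_bot_iff] at h1
    have := wreg_drop x a l ∅ hl (by simp)
    rw [e0] at this
    apply this
    rw [List.map_cons, List.map_map] at h1
    refine ⟨h1.1, wreg_congr _ _ l _ ?_ h1.2⟩
    intro j
    refine Ideal.mem_sup_right ?_
    rw [Ideal.mem_span_singleton']
    exact ⟨X j, by simp [MvPolynomial.algebraMap_eq, mul_comm]⟩
  · rw [List.nodup_cons] at hl
    have h0 := regMod_y x a ∅ j (by simp) (Or.inr hu)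
    rw [e0] at h0
    refine ⟨h0, ?_⟩
    have e1 : (⊥ : Ideal (MvPolynomial σ A)) ⊔ Ideal.span {C x * X j - C (a j)} =
        Ideal.span ((fun m => C x * X m - C (a m) : σ → MvPolynomial σ A) '' {j}) := by simp
    rw [e1]
    apply wreg_drop x a l {j} hl.2
    · rintro m hm rfl
      exact hl.1 hm
    obtain ⟨b, hb⟩ := hu.exists_left_inv
    have hCb : (C b * C (a j) : MvPolynomial σ A) = 1 := by rw [← C_mul, hb, C_1]
    have hy : (C x * X j - C (a j) : MvPolynomial σ A) ∈
        Ideal.span ((fun m => C x * X m - C (a m) : σ → MvPolynomial σ A) '' {j}) :=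
      Ideal.subset_span ⟨j, rfl, rfl⟩
    refine ⟨?_, ?_⟩
    · intro p hp
      have : p = C b * X j * (C x * p) - C b * p * (C x * X j - C (a j)) := by
        linear_combination (- p) * hCb
      rw [this]
      exact sub_mem (Ideal.mul_mem_left _ _ hp) (Ideal.mul_mem_left _ _ hy)
    · have : Ideal.span ((fun m => C x * X m - C (a m) : σ → MvPolynomial σ A) '' {j}) ⊔
          Ideal.span {C x} = ⊤ := by
        rw [Ideal.eq_top_iff_one]
        have : (1 : MvPolynomial σ A) = C b * X j * C x - C b * (C x * X j - C (a j)) := by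
          linear_combination - hCb
        rw [this]
        exact sub_mem (Ideal.mem_sup_right (Ideal.mul_mem_left _ _
          (Ideal.mem_span_singleton_self _))) (Ideal.mem_sup_left (Ideal.mul_mem_left _ _ hy))
      rw [this]
      exact wreg_top _

/-- If `x` is a unit every sequence starting with `x` is weakly regular. -/
lemma weaklyRegular_unit {A : Type*} [CommRing A] (x : A) (l : List A) (hx : IsUnit x) :
    IsWeaklyRegular A (x :: l) := by
  rw [← wreg_bot_iff]
  refine ⟨fun p hp => ?_, ?_⟩
  · exact (Ideal.unit_mul_mem_iff_mem _ hx).1 hp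
  · rw [Ideal.span_singleton_eq_top.2 hx, sup_top_eq]
    exact wreg_top _

lemma perm_list {n : ℕ} (i : Fin n) (l : List {j : Fin n // j ≠ i}) (hl : l.Nodup)
    (hm : ∀ j, j ∈ l) : (List.finRange n).Perm (i :: l.map Subtype.val) := by
  rw [List.perm_ext_iff_of_nodup (List.nodup_finRange n)]
  · intro j
    by_cases h : j = i
    · simp [h]
    · simp [h, hm]
  · rw [List.nodup_cons]
    refine ⟨by simp, hl.map Subtype.val_injective⟩

lemma weaklyRegular_nonunit {A : Type*} [CommRing A] [IsNoetherianRing A] [IsLocalRing A]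
    {n : ℕ} (a : Fin n → A) (h : IsWeaklyRegular A ((List.finRange n).map a))
    (hu : ∀ j, ¬ IsUnit (a j)) (i : Fin n) (l : List {j : Fin n // j ≠ i}) (hl : l.Nodup)
    (hm : ∀ j, j ∈ l) : IsWeaklyRegular A (a i :: l.map (fun j => a j.1)) := by
  refine IsLocalRing.isWeaklyRegular_of_perm_of_subset_maximalIdeal h ?_ ?_
  · have := (perm_list i l hl hm).map a
    simpa [List.map_map, Function.comp_def] using this
  · intro r hr
    obtain ⟨j, _, rfl⟩ := List.mem_map.1 hr
    exact hu j

lemma exists_order {A' A : Type*} [CommRing A'] [IsNoetherianRing A'] [IsLocalRing A']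
    [CommRing A] [IsNoetherianRing A] [IsLocalRing A] (f : A' →+* A)
    {n : ℕ} (a' : Fin n → A') (h' : IsWeaklyRegular A' ((List.finRange n).map a'))
    (h : IsWeaklyRegular A ((List.finRange n).map (fun j => f (a' j)))) (i : Fin n) :
    ∃ l : List {j : Fin n // j ≠ i}, l.Nodup ∧ (∀ j, j ∈ l) ∧
      (IsWeaklyRegular A' (a' i :: l.map (fun j => a' j.1)) ∨
        ∃ j l', l = j :: l' ∧ IsUnit (a' j.1)) ∧
      (IsWeaklyRegular A (f (a' i) :: l.map (fun j => f (a' j.1))) ∨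
        ∃ j l', l = j :: l' ∧ IsUnit (f (a' j.1))) := by
  classical
  have hall : ∃ l : List {j : Fin n // j ≠ i}, l.Nodup ∧ (∀ j, j ∈ l) :=
    ⟨Finset.univ.toList, Finset.nodup_toList _, by simp⟩
  have hhead : ∀ j : {j : Fin n // j ≠ i}, ∃ l : List {j : Fin n // j ≠ i},
      (j :: l).Nodup ∧ (∀ m, m ∈ j :: l) := by
    intro j
    refine ⟨(Finset.univ.erase j).toList, ?_, ?_⟩
    · rw [List.nodup_cons]
      exact ⟨by simp, Finset.nodup_toList _⟩
    · intro m
      by_cases hm : m = j <;> simp [hm]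
  by_cases h1 : ∃ j : {j : Fin n // j ≠ i}, IsUnit (a' j.1)
  · obtain ⟨j, hj⟩ := h1
    obtain ⟨l, hl, hm⟩ := hhead j
    exact ⟨j :: l, hl, hm, Or.inr ⟨j, l, rfl, hj⟩, Or.inr ⟨j, l, rfl, hj.map f⟩⟩
  by_cases h2 : IsUnit (a' i)
  · obtain ⟨l, hl, hm⟩ := hall
    exact ⟨l, hl, hm, Or.inl (weaklyRegular_unit _ _ h2),
      Or.inl (weaklyRegular_unit _ _ (h2.map f))⟩
  have hn' : ∀ j, ¬ IsUnit (a' j) := by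
    intro j hj
    by_cases hji : j = i
    · exact h2 (hji ▸ hj)
    · exact h1 ⟨⟨j, hji⟩, hj⟩
  by_cases h3 : ∃ j : {j : Fin n // j ≠ i}, IsUnit (f (a' j.1))
  · obtain ⟨j, hj⟩ := h3
    obtain ⟨l, hl, hm⟩ := hhead j
    exact ⟨j :: l, hl, hm, Or.inl (weaklyRegular_nonunit a' h' hn' i _ hl hm),
      Or.inr ⟨j, l, rfl, hj⟩⟩
  obtain ⟨l, hl, hm⟩ := hall
  refine ⟨l, hl, hm, Or.inl (weaklyRegular_nonunit a' h' hn' i _ hl hm), Or.inl ?_⟩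
  by_cases h4 : IsUnit (f (a' i))
  · exact weaklyRegular_unit _ _ h4
  refine weaklyRegular_nonunit (fun j => f (a' j)) h ?_ i _ hl hm
  intro j hj
  by_cases hji : j = i
  · exact h4 (hji ▸ hj)
  · exact h3 ⟨⟨j, hji⟩, hj⟩


/-- the base change of a quotient -/
lemma productMap_bijective {R S : Type*} [CommRing R] [CommRing S] [Algebra R S]
    (I : Ideal R) (J : Ideal S) (hJ : J = I.map (algebraMap R S))
    (g : (R ⧸ I) →ₐ[R] (S ⧸ J)) :
    Function.Bijective (Algebra.TensorProduct.productMap (Ideal.Quotient.mkₐ R J) g) := by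
  have hs : ∀ z : S ⊗[R] (R ⧸ I), ∃ b : S, z = b ⊗ₜ 1 := by
    intro z
    induction z with
    | zero => exact ⟨0, by simp⟩
    | add x y hx hy =>
      obtain ⟨b, rfl⟩ := hx
      obtain ⟨c, rfl⟩ := hy
      exact ⟨b + c, by rw [TensorProduct.add_tmul]⟩
    | tmul b q =>
      obtain ⟨r, rfl⟩ := Ideal.Quotient.mk_surjective q
      refine ⟨r • b, ?_⟩
      rw [TensorProduct.smul_tmul]
      congr 1
      rw [Algebra.smul_def, mul_one]; rfl
  constructor
  · rw [injective_iff_map_eq_zero]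
    intro z hz
    obtain ⟨b, rfl⟩ := hs z
    rw [Algebra.TensorProduct.productMap_apply_tmul, map_one, mul_one, Ideal.Quotient.mkₐ_eq_mk,
      Ideal.Quotient.eq_zero_iff_mem, hJ] at hz
    have hle : I.map (algebraMap R S) ≤ RingHom.ker
        (Algebra.TensorProduct.includeLeft : S →ₐ[R] S ⊗[R] (R ⧸ I)).toRingHom := by
      rw [Ideal.map_le_iff_le_comap]
      intro r hr
      rw [Ideal.mem_comap, RingHom.mem_ker]
      have : (algebraMap R S r) ⊗ₜ[R] (1 : R ⧸ I) = 0 := by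
        rw [Algebra.algebraMap_eq_smul_one, TensorProduct.smul_tmul, Algebra.smul_def, mul_one]
        rw [show algebraMap R (R ⧸ I) r = 0 from Ideal.Quotient.eq_zero_iff_mem.2 hr,
          TensorProduct.tmul_zero]
      exact this
    exact hle hz
  · intro q
    obtain ⟨b, rfl⟩ := Ideal.Quotient.mk_surjective q
    exact ⟨b ⊗ₜ 1, by simp⟩

end RegPart

lemma span_range_eq_ofList {R σ : Type*} [CommRing R] (y : σ → R) (l : List σ)
    (hm : ∀ j, j ∈ l) : Ideal.span (Set.range y) = Ideal.ofList (l.map y) := by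
  unfold Ideal.ofList
  congr 1
  ext z
  simp [hm]

open CategoryTheory MvPolynomial in
theorem statement6 (A' A : Type) [CommRing A'] [IsNoetherianRing A'] [IsLocalRing A']
    [CommRing A] [IsNoetherianRing A] [IsLocalRing A] [Algebra A' A]
    (r : ℕ) (hr : 1 ≤ r) (a' : Fin (r + 1) → A')
    (hreg' : IsRegularSequence ((List.finRange (r + 1)).map a'))
    (hreg : IsRegularSequence ((List.finRange (r + 1)).map (fun j => algebraMap A' A (a' j))))
    (i : Fin (r + 1)) (k : ℕ) (hk : 0 < k) :
    Subsingleton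
        (((Tor (ModuleCat (MvPolynomial {j : Fin (r + 1) // j ≠ i} A')) k).obj
            (ModuleCat.of _ (MvPolynomial {j : Fin (r + 1) // j ≠ i} A))).obj
          (ModuleCat.of _ (MvPolynomial {j : Fin (r + 1) // j ≠ i} A' ⧸
            Ideal.span (Set.range fun j : {j : Fin (r + 1) // j ≠ i} =>
              C (a' i) * X j - C (a' j.1))))) ∧
      Function.Bijective
        (Algebra.TensorProduct.productMap
          (Ideal.Quotient.mkₐ (MvPolynomial {j : Fin (r + 1) // j ≠ i} A')
            (Ideal.span (Set.range fun j : {j : Fin (r + 1) // j ≠ i} =>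
              C (algebraMap A' A (a' i)) * X j - C (algebraMap A' A (a' j.1)))))
          (Ideal.quotientMapₐ
            (I := Ideal.span (Set.range fun j : {j : Fin (r + 1) // j ≠ i} =>
              C (a' i) * X j - C (a' j.1)))
            (Ideal.span (Set.range fun j : {j : Fin (r + 1) // j ≠ i} =>
              C (algebraMap A' A (a' i)) * X j - C (algebraMap A' A (a' j.1))))
            (Algebra.ofId (MvPolynomial {j : Fin (r + 1) // j ≠ i} A')
              (MvPolynomial {j : Fin (r + 1) // j ≠ i} A))
            (by
              rw [Ideal.span_le]
              rintro p ⟨j, rfl⟩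
              simp only [SetLike.mem_coe, Ideal.mem_comap, Algebra.ofId_apply,
                MvPolynomial.algebraMap_def, map_sub, map_mul, MvPolynomial.map_C,
                MvPolynomial.map_X]
              exact Ideal.subset_span ⟨j, rfl⟩))) := by
  constructor
  · obtain ⟨k, rfl⟩ : ∃ m, k = m + 1 := ⟨k - 1, by omega⟩
    obtain ⟨l, hl, hm, h', h⟩ := exists_order (algebraMap A' A) a'
      ((isRegularSequence_iff _).1 hreg') ((isRegularSequence_iff _).1 hreg) i
    have w' := weaklyRegular_y (a' i) (fun j : {j : Fin (r + 1) // j ≠ i} => a' j.1) l hl h'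
    have w := weaklyRegular_y (algebraMap A' A (a' i))
      (fun j : {j : Fin (r + 1) // j ≠ i} => algebraMap A' A (a' j.1)) l hl h
    rw [span_range_eq_ofList _ l hm]
    refine tor_subsingleton w' _ ?_ k
    rw [← RingTheory.Sequence.isWeaklyRegular_map_algebraMap_iff
      (S := MvPolynomial {j : Fin (r + 1) // j ≠ i} A), List.map_map]
    convert w using 2
    ext1 j
    simp only [Function.comp_apply, MvPolynomial.algebraMap_def, map_sub, map_mul,
      MvPolynomial.map_C, MvPolynomial.map_X]
  · apply productMap_bijective
    rw [Ideal.map_span, ← Set.range_comp]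
    congr 2
    ext1 j
    simp only [Function.comp_apply, MvPolynomial.algebraMap_def, map_sub, map_mul,
      MvPolynomial.map_C, MvPolynomial.map_X]
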